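/- arXiv:1208.2130 — 2 statements merged into one kernel-verified Lean document; each statement's English description precedes it below -/
import Mathlib

section
/- For every dimension d ≥ 1 and every δ ∈ (0,1) there exists a constant c(d,δ) > 0 such that for every finite subset C of ℝ^d with at least two elements and every real number s ≥ 2, the set of points of C that are (δ,s)-supported in C has cardinality at most c(d,δ)·|C|/s. -/
/-- The isolation radius of `w` in the finite set `C`: the minimal distance
from `w` to a different point of `C`. -/
noncomputable def isolationRadius {M : Type*} [MetricSpace M] (C : Set M) (w : M) : ℝ :=
  sInf {r : ℝ | ∃ z ∈ C, z ≠ w ∧ r = dist w z}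

/-- `w` is `(δ,s)`-supported in `C`: for every `p`, the set
`C ∩ (B(w, δ⁻¹ρ) \ B(p, δρ))` has at least `s` points, where `ρ` is the isolation
radius of `w` in `C` and balls are closed. -/
def IsSupported {M : Type*} [MetricSpace M] (C : Set M) (δ s : ℝ) (w : M) : Prop :=
  ∀ p : M,
    s ≤ ((C ∩ (Metric.closedBall w (δ⁻¹ * isolationRadius C w) \
        Metric.closedBall p (δ * isolationRadius C w))).ncard : ℝ)

/-!
In a nested sequence of partitions of `C`, call a coarse cell branching if at least `s` of its
points remain after deleting any one of its fine subcells. Give a cell with `a` points the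
potential `max 0 (2 * a / s - 1)`. Passing from the fine to the coarse partition never decreases
the total potential and raises it by at least `1` for each branching cell, while the total never
exceeds `2 * |C| / s`. Telescoping over all scales, with coarse cells `m` levels above the fine
ones, bounds the number of branching cells by `m * (2 * |C| / s)`.

By the one-third trick, finitely many shifted dyadic grids suffice to put every ball inside a cell
of comparable size. If `w` is supported, take a grid with a cell containing the ball of radius
`δ⁻¹ * ρ` about `w`, where `ρ` is the isolation radius, and compare it with cells of diameter at
most `δ * ρ`: the large cell is branching. The isolation radii keep the points charged to one
branching cell in distinct fine cells, so only boundedly many are charged to each.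
-/

namespace BenjaminiSchramm

open Finset

section Counting

/-- The potential assigned to a cell with `a` points in order to count branching cells. The offset
`-1` is what merging two cells of positive potential gains. -/
noncomputable def excess (s a : ℝ) : ℝ := max 0 (2 * a / s - 1)

lemma excess_nonneg (s a : ℝ) : 0 ≤ excess s a := le_max_left _ _

lemma sub_one_le_excess (s a : ℝ) : 2 * a / s - 1 ≤ excess s a := le_max_right _ _

lemma excess_of_pos {s a : ℝ} (h : 0 < excess s a) : excess s a = 2 * a / s - 1 :=
  (max_choice _ _).resolve_left h.ne'

lemma excess_le_two_mul_div {s a : ℝ} (hs : 0 < s) (ha : 0 ≤ a) : excess s a ≤ 2 * a / s :=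
  max_le (by positivity) (by linarith)

variable {α β γ : Type*} {s : ℝ}

lemma sum_excess_le_excess_sum (hs : 0 < s) {T : Finset β} {a : β → ℝ} (ha : ∀ b, 0 ≤ a b) :
    ∑ b ∈ T, excess s (a b) ≤ excess s (∑ b ∈ T, a b) := by
  classical
  by_cases hT : ∃ b ∈ T, 0 < excess s (a b)
  · obtain ⟨b, hbT, hb⟩ := hT
    calc ∑ b ∈ T, excess s (a b)
        = ∑ b ∈ T.erase b, excess s (a b) + excess s (a b) := (sum_erase_add _ _ hbT).symm
      _ ≤ ∑ b ∈ T.erase b, 2 * a b / s + (2 * a b / s - 1) :=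
          add_le_add (sum_le_sum fun c _ => excess_le_two_mul_div hs (ha c)) (excess_of_pos hb).le
      _ = 2 * (∑ b ∈ T, a b) / s - 1 := by
          rw [← add_sub_assoc, sum_erase_add _ _ hbT, mul_sum, sum_div]
      _ ≤ excess s (∑ b ∈ T, a b) := sub_one_le_excess _ _
  · push Not at hT
    exact (sum_nonpos hT).trans (excess_nonneg _ _)

lemma sum_excess_add_one_le_excess_sum (hs : 0 < s) {T : Finset β} {a : β → ℝ}
    (ha : ∀ b, 0 ≤ a b) (hT : s ≤ ∑ b ∈ T, a b) (hsplit : ∀ b ∈ T, s + a b ≤ ∑ c ∈ T, a c) :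
    ∑ b ∈ T, excess s (a b) + 1 ≤ excess s (∑ b ∈ T, a b) := by
  classical
  refine le_trans ?_ (sub_one_le_excess _ _)
  by_cases hpos : ∃ b ∈ T, 0 < excess s (a b)
  · obtain ⟨b, hbT, hb⟩ := hpos
    have hrest : s ≤ ∑ c ∈ T.erase b, a c := by
      linarith [hsplit b hbT, sum_erase_add T a hbT]
    have hrest_div : 1 ≤ (∑ c ∈ T.erase b, a c) / s := (one_le_div hs).2 hrest
    have hexcess_rest : ∑ c ∈ T.erase b, excess s (a c) + 1 ≤ 2 * (∑ c ∈ T.erase b, a c) / s := by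
      rw [← le_sub_iff_add_le]
      exact (sum_excess_le_excess_sum hs ha).trans
        (max_le (by rw [mul_div_assoc]; linarith) le_rfl)
    rw [← sum_erase_add _ _ hbT, ← sum_erase_add T a hbT, excess_of_pos hb, mul_add, add_div]
    linarith
  · push Not at hpos
    have hT_div : 1 ≤ (∑ b ∈ T, a b) / s := (one_le_div hs).2 hT
    rw [mul_div_assoc]
    linarith [sum_nonpos hpos]

variable [DecidableEq β] [DecidableEq γ] {C : Finset α} {f : α → β} {g : α → γ}

/-- No fibre of `f` contains all but fewer than `s` points of `C`. Thinking of the fibres of `f` as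
the subcells of a cell `C`, this is the scale-by-scale counterpart of `IsSupported`. -/
def IsBranching (C : Finset α) (f : α → β) (s : ℝ) : Prop :=
  ∀ b, s ≤ #{x ∈ C | f x ≠ b}

open Classical in
/-- The labels of those fibres of `g` in `C` that the fibres of `f` split into branching pieces. -/
noncomputable def branchingCells (C : Finset α) (f : α → β) (g : α → γ) (s : ℝ) : Finset γ :=
  {c ∈ C.image g | IsBranching {x ∈ C | g x = c} f s}

/-- The total potential of the partition of `C` into the fibres of `f`. -/
noncomputable def fiberExcess (C : Finset α) (f : α → β) (s : ℝ) : ℝ :=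
  ∑ b ∈ C.image f, excess s #{x ∈ C | f x = b}

lemma fiberExcess_nonneg : 0 ≤ fiberExcess C f s :=
  sum_nonneg fun _ _ => excess_nonneg _ _

lemma sum_card_fiber (C : Finset α) (f : α → β) :
    ∑ b ∈ C.image f, (#{x ∈ C | f x = b} : ℝ) = #C := by
  exact_mod_cast (card_eq_sum_card_image f C).symm

lemma fiberExcess_le_excess_card (hs : 0 < s) : fiberExcess C f s ≤ excess s #C := by
  rw [← sum_card_fiber C f]
  exact sum_excess_le_excess_sum hs fun _ => Nat.cast_nonneg _

lemma fiberExcess_le_two_mul_card_div (hs : 0 < s) : fiberExcess C f s ≤ 2 * #C / s :=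
  (fiberExcess_le_excess_card hs).trans (excess_le_two_mul_div hs (Nat.cast_nonneg _))

lemma IsBranching.le_card (h : IsBranching C f s) (hC : C.Nonempty) : s ≤ #C := by
  obtain ⟨x, -⟩ := hC
  exact (h (f x)).trans (mod_cast card_filter_le _ _)

lemma IsBranching.fiberExcess_add_one_le (h : IsBranching C f s) (hs : 0 < s)
    (hC : C.Nonempty) : fiberExcess C f s + 1 ≤ excess s #C := by
  rw [← sum_card_fiber C f]
  refine sum_excess_add_one_le_excess_sum hs (fun _ => Nat.cast_nonneg _) ?_ fun b _ => ?_
  · exact (h.le_card hC).trans_eq (sum_card_fiber C f).symm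
  · have hcompl : (#{x ∈ C | f x = b} : ℝ) + #{x ∈ C | f x ≠ b} = #C := by
      exact_mod_cast card_filter_add_card_filter_not (s := C) fun x => f x = b
    rw [sum_card_fiber]
    linarith [h b]

lemma fiberExcess_eq_sum_of_ker_le (h : Setoid.ker f ≤ Setoid.ker g) :
    fiberExcess C f s = ∑ c ∈ C.image g, fiberExcess {x ∈ C | g x = c} f s := by
  have hdisj : ((C.image g : Finset γ) : Set γ).PairwiseDisjoint
      fun c => image f {x ∈ C | g x = c} := by
    intro c _ c' _ hcc'
    refine disjoint_left.2 fun b hb hb' => hcc' ?_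
    obtain ⟨x, hx, rfl⟩ := mem_image.1 hb
    obtain ⟨y, hy, hyx⟩ := mem_image.1 hb'
    rw [← (mem_filter.1 hx).2, ← (mem_filter.1 hy).2]
    exact (h hyx).symm
  have himage : C.image f = (C.image g).biUnion fun c => image f {x ∈ C | g x = c} := by
    ext b
    simp only [mem_image, mem_biUnion, mem_filter]
    grind
  rw [fiberExcess, himage, sum_biUnion hdisj]
  refine sum_congr rfl fun c _ => sum_congr rfl fun b hb => ?_
  obtain ⟨x, hx, rfl⟩ := mem_image.1 hb
  have hcell : ∀ y, f y = f x → g y = c := fun y hy => (h hy).trans (mem_filter.1 hx).2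
  rw [filter_filter, filter_congr fun y _ => and_iff_right_of_imp (hcell y)]

lemma card_branchingCells_le_fiberExcess_sub (hs : 0 < s) (h : Setoid.ker f ≤ Setoid.ker g) :
    (#(branchingCells C f g s) : ℝ) ≤ fiberExcess C g s - fiberExcess C f s := by
  classical
  rw [le_sub_iff_add_le', fiberExcess_eq_sum_of_ker_le h, branchingCells, ← sum_boole,
    ← sum_add_distrib]
  refine sum_le_sum fun c hc => ?_
  split_ifs with hbranch
  · obtain ⟨x, hx, hxc⟩ := mem_image.1 hc
    exact hbranch.fiberExcess_add_one_le hs ⟨x, mem_filter.2 ⟨hx, hxc⟩⟩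
  · rw [add_zero]
    exact fiberExcess_le_excess_card hs

lemma sum_sub_shift_le_of_monotone {F : ℤ → ℝ} (hF : Monotone F) (hF0 : ∀ k, 0 ≤ F k) (m : ℕ)
    (K : Finset ℤ) (n : ℤ) (hn : ∀ k ∈ K, k < n) :
    ∑ k ∈ K, (F (k + m) - F k) ≤ ∑ i ∈ range m, F (n + i) := by
  induction K using induction_on_max generalizing n with
  | empty => simpa only [sum_empty] using sum_nonneg fun i _ => hF0 _
  | insert a K hK ih =>
    have ha : a + 1 ≤ n := hn a (mem_insert_self a K)
    rw [sum_insert fun haK => (hK a haK).false]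
    calc F (a + m) - F a + ∑ k ∈ K, (F (k + m) - F k)
        ≤ F (a + m) - F a + ∑ i ∈ range m, F (a + i) := by gcongr; exact ih a hK
      _ = ∑ i ∈ range m, (F (a + (i + 1 : ℕ)) - F (a + i)) + ∑ i ∈ range m, F (a + i) := by
          rw [sum_range_sub fun i : ℕ => F (a + i), Nat.cast_zero, add_zero]
      _ = ∑ i ∈ range m, F (a + (i + 1 : ℕ)) := by rw [sum_sub_distrib, sub_add_cancel]
      _ ≤ ∑ i ∈ range m, F (n + i) := sum_le_sum fun i _ => hF (by push_cast; linarith)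

lemma sum_card_branchingCells_le (hs : 0 < s) {q : ℤ → α → β}
    (hq : Monotone fun k => Setoid.ker (q k)) (m : ℕ) (K : Finset ℤ) :
    ∑ k ∈ K, (#(branchingCells C (q k) (q (k + m)) s) : ℝ) ≤ m * (2 * #C / s) := by
  have hmono : Monotone fun k => fiberExcess C (q k) s := fun i j hij =>
    sub_nonneg.1 ((Nat.cast_nonneg _).trans (card_branchingCells_le_fiberExcess_sub hs (hq hij)))
  obtain ⟨n, hn⟩ := K.exists_le
  calc ∑ k ∈ K, (#(branchingCells C (q k) (q (k + m)) s) : ℝ)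
      ≤ ∑ k ∈ K, (fiberExcess C (q (k + m)) s - fiberExcess C (q k) s) :=
        sum_le_sum fun k _ => card_branchingCells_le_fiberExcess_sub hs (hq (by simp))
    _ ≤ ∑ i ∈ range m, fiberExcess C (q (n + 1 + i)) s :=
        sum_sub_shift_le_of_monotone hmono (fun _ => fiberExcess_nonneg) m K (n + 1)
          fun k hk => Int.lt_add_one_of_le (hn k hk)
    _ ≤ ∑ i ∈ range m, 2 * #C / s := sum_le_sum fun _ _ => fiberExcess_le_two_mul_card_div hs
    _ = m * (2 * #C / s) := by rw [sum_const, card_range, nsmul_eq_mul]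

end Counting

section Isolation

variable {M : Type*} [MetricSpace M]

lemma isolationRadius_le_dist {C : Set M} {w z : M} (hz : z ∈ C) (hzw : z ≠ w) :
    isolationRadius C w ≤ dist w z := by
  refine csInf_le ⟨0, ?_⟩ ⟨z, hz, hzw, rfl⟩
  rintro r ⟨x, -, -, rfl⟩
  exact dist_nonneg

lemma isolationRadius_pos {C : Set M} (hfin : C.Finite) (hC : C.Nontrivial) (w : M) :
    0 < isolationRadius C w := by
  have hmem : isolationRadius C w ∈ {r : ℝ | ∃ z ∈ C, z ≠ w ∧ r = dist w z} := by
    refine Set.Nonempty.csInf_mem ?_ ((hfin.image (dist w)).subset ?_)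
    · obtain ⟨z, hz, hzw⟩ := hC.exists_ne w
      exact ⟨_, z, hz, hzw, rfl⟩
    · rintro r ⟨z, hz, -, rfl⟩
      exact ⟨z, hz, rfl⟩
  obtain ⟨z, -, hzw, hz⟩ := hmem
  exact hz ▸ dist_pos.2 hzw.symm

lemma mem_branchingCells_of_isSupported {β γ : Type*} [DecidableEq β] [DecidableEq γ]
    {C : Finset M} {w : M} (hw : w ∈ C) {δ s : ℝ} (hsupp : IsSupported (C : Set M) δ s w)
    {f : M → β} {g : M → γ}
    (hf : ∀ x y, f x = f y → dist x y ≤ δ * isolationRadius (C : Set M) w)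
    (hg : ∀ x, dist x w ≤ δ⁻¹ * isolationRadius (C : Set M) w → g x = g w) :
    g w ∈ branchingCells C f g s := by
  classical
  refine mem_filter.2 ⟨mem_image_of_mem g hw, fun b => ?_⟩
  obtain ⟨p, hp⟩ : ∃ p, ∀ x, f x = b → dist x p ≤ δ * isolationRadius (C : Set M) w := by
    by_cases hb : ∃ p, f p = b
    · obtain ⟨p, rfl⟩ := hb
      exact ⟨p, fun x => hf x p⟩
    · exact ⟨w, fun x hx => (hb ⟨x, hx⟩).elim⟩
  refine (hsupp p).trans ?_
  rw [← Set.ncard_coe_finset, Nat.cast_le]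
  refine Set.ncard_le_ncard ?_ (finite_toSet _)
  rintro x ⟨hxC, hxw, hxp⟩
  exact mem_filter.2 ⟨mem_filter.2 ⟨hxC, hg x hxw⟩, fun hxb => hxp (hp x hxb)⟩

end Isolation

section Grid

lemma exists_int_abs_sub_le_of_floor_ne {u v : ℝ} (h : ⌊u⌋ ≠ ⌊v⌋) :
    ∃ n : ℤ, |u - n| ≤ |u - v| := by
  rcases h.lt_or_gt with hlt | hlt
  · refine ⟨⌊v⌋, ?_⟩
    have hu : u < ⌊v⌋ := Int.floor_lt.1 hlt
    rw [abs_sub_comm, abs_of_pos (sub_pos.2 hu), abs_sub_comm]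
    exact (sub_le_sub_right (Int.floor_le v) u).trans (le_abs_self _)
  · refine ⟨⌊u⌋, ?_⟩
    have hv : v < ⌊u⌋ := Int.floor_lt.1 hlt
    rw [abs_of_nonneg (sub_nonneg.2 (Int.floor_le u))]
    exact (sub_le_sub_left hv.le u).trans (le_abs_self _)

/-- The index of the interval containing `x` in the dyadic grid of mesh `2 ^ k`, translated by `e`
thirds of the mesh. The sign of the translation alternates with `k` so that, for each `e`, the grids
are nested over all integers `k`. -/
noncomputable def dyadicIndex (e : ℕ) (k : ℤ) (x : ℝ) : ℤ := ⌊x / 2 ^ k + (-1) ^ k * e / 3⌋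

lemma exists_intCast_eq_neg_one_zpow (k : ℤ) :
    ∃ σ : ℤ, (σ = 1 ∨ σ = -1) ∧ (σ : ℝ) = (-1) ^ k := by
  rcases Int.even_or_odd k with hk | hk
  · exact ⟨1, .inl rfl, by rw [hk.neg_one_zpow, Int.cast_one]⟩
  · exact ⟨-1, .inr rfl, by rw [hk.neg_one_zpow, Int.cast_neg, Int.cast_one]⟩

lemma exists_dyadicIndex_succ_eq_ediv (e : ℕ) (k : ℤ) :
    ∃ j : ℤ, ∀ x, dyadicIndex e (k + 1) x = (dyadicIndex e k x - j) / 2 := by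
  obtain ⟨σ, -, hσ⟩ := exists_intCast_eq_neg_one_zpow k
  refine ⟨σ * e, fun x => ?_⟩
  have harg : x / 2 ^ (k + 1) + (-1) ^ (k + 1) * e / 3 =
      (x / 2 ^ k + (-1) ^ k * e / 3 - (σ * e : ℤ)) / (2 : ℕ) := by
    rw [zpow_add_one₀ two_ne_zero, zpow_add_one₀ (by norm_num), ← hσ]
    push_cast
    field_simp
    ring
  rw [dyadicIndex, harg, Int.floor_div_natCast, Int.floor_sub_intCast, dyadicIndex, Nat.cast_ofNat]

lemma abs_sub_lt_of_dyadicIndex_eq {e : ℕ} {k : ℤ} {x y : ℝ}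
    (h : dyadicIndex e k x = dyadicIndex e k y) : |x - y| < 2 ^ k := by
  have hpow : (0 : ℝ) < 2 ^ k := by positivity
  have hlt := Int.abs_sub_lt_one_of_floor_eq_floor h
  rwa [add_sub_add_right_eq_sub, ← sub_div, abs_div, abs_of_pos hpow, div_lt_one hpow] at hlt

lemma abs_dyadicIndex_sub_le {e : ℕ} {k : ℤ} {m : ℕ} {x y : ℝ} (h : |x - y| < 2 ^ (k + m)) :
    |dyadicIndex e k x - dyadicIndex e k y| ≤ 2 ^ m := by
  have hpow : (0 : ℝ) < 2 ^ k := by positivity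
  set u := x / 2 ^ k + (-1) ^ k * (e : ℝ) / 3 with hu
  set v := y / 2 ^ k + (-1) ^ k * (e : ℝ) / 3 with hv
  have huv : |u - v| < 2 ^ m := by
    rwa [hu, hv, add_sub_add_right_eq_sub, ← sub_div, abs_div, abs_of_pos hpow, div_lt_iff₀ hpow,
      ← zpow_natCast, ← zpow_add₀ two_ne_zero, add_comm]
  have hfloor : |(⌊u⌋ : ℝ) - ⌊v⌋| < 2 ^ m + 1 := by
    rw [abs_lt] at huv ⊢
    constructor <;>
      linarith [Int.floor_le u, Int.lt_floor_add_one u, Int.floor_le v, Int.lt_floor_add_one v]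
  exact Int.lt_add_one_iff.1 (mod_cast hfloor)

/-- If both grids separated `x` from points nearby, both would have an endpoint at normalized
distance less than `1 / 6` from `x`, but their endpoints are at least `1 / 3` apart. -/
lemma exists_dyadicIndex_eq_of_abs_sub_lt (k : ℤ) (x : ℝ) :
    ∃ e : Fin 2, ∀ y, |y - x| < 2 ^ k / 6 → dyadicIndex e k y = dyadicIndex e k x := by
  by_contra! hsep
  obtain ⟨σ, hσ_abs, hσ⟩ := exists_intCast_eq_neg_one_zpow k
  have hnear : ∀ e : Fin 2, ∃ n : ℤ, |x / 2 ^ k + σ * ((e : ℕ) : ℝ) / 3 - n| < 1 / 6 := by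
    intro e
    obtain ⟨y, hy, hne⟩ := hsep e
    obtain ⟨n, hn⟩ := exists_int_abs_sub_le_of_floor_ne hne.symm
    refine ⟨n, hσ ▸ hn.trans_lt ?_⟩
    have hpow : (0 : ℝ) < 2 ^ k := by positivity
    rw [add_sub_add_right_eq_sub, ← sub_div, abs_div, abs_of_pos hpow, div_lt_iff₀ hpow,
      abs_sub_comm]
    linarith
  obtain ⟨a, ha⟩ := hnear 0
  obtain ⟨b, hb⟩ := hnear 1
  simp only [Fin.val_zero, Fin.val_one, Nat.cast_zero, Nat.cast_one, mul_zero, mul_one, zero_div,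
    add_zero, abs_lt] at ha hb
  have hlt : -1 < σ - 3 * (b - a) := by
    have : (-1 : ℝ) < σ - 3 * (b - a) := by linarith
    exact_mod_cast this
  have hgt : σ - 3 * (b - a) < 1 := by
    have : (σ : ℝ) - 3 * (b - a) < 1 := by linarith
    exact_mod_cast this
  omega

variable {ι : Type*}

/-- The label of the cube containing `x` in the grid of mesh `2 ^ k` translated by `e i` thirds of
the mesh in direction `i`. -/
noncomputable def gridCell (e : ι → Fin 2) (k : ℤ) (x : ι → ℝ) : ι → ℤ :=
  fun i => dyadicIndex (e i) k (x i)

lemma monotone_ker_gridCell (e : ι → Fin 2) : Monotone fun k => Setoid.ker (gridCell e k) := by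
  refine monotone_int_of_le_succ fun k x y hxy => funext fun i => ?_
  obtain ⟨j, hj⟩ := exists_dyadicIndex_succ_eq_ediv (e i) k
  have hi : dyadicIndex (e i) k (x i) = dyadicIndex (e i) k (y i) := congrFun hxy i
  simp only [gridCell, hj, hi]

lemma gridCell_eq_of_intCast_eq {e : ι → Fin 2} {k : ℤ} {m : ℕ} {x y : ι → ℝ}
    (hcoarse : gridCell e (k + m) x = gridCell e (k + m) y)
    (hmod : ∀ i, (gridCell e k x i : ZMod (2 ^ m + 1)) = gridCell e k y i) :
    gridCell e k x = gridCell e k y := by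
  funext i
  have hdvd := (ZMod.intCast_eq_intCast_iff_dvd_sub _ _ _).1 (hmod i).symm
  have hle : |gridCell e k x i - gridCell e k y i| ≤ 2 ^ m :=
    abs_dyadicIndex_sub_le (abs_sub_lt_of_dyadicIndex_eq (congrFun hcoarse i))
  refine sub_eq_zero.1 (Int.eq_zero_of_abs_lt_dvd hdvd ?_)
  push_cast
  exact Int.lt_add_one_of_le hle

variable [Fintype ι]

lemma dist_le_of_gridCell_eq {e : ι → Fin 2} {k : ℤ} {x y : ι → ℝ}
    (h : gridCell e k x = gridCell e k y) : dist x y ≤ 2 ^ k :=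
  (dist_pi_le_iff (by positivity)).2 fun i => (abs_sub_lt_of_dyadicIndex_eq (congrFun h i)).le

lemma exists_gridCell_eq_of_dist_lt (k : ℤ) (x : ι → ℝ) :
    ∃ e : ι → Fin 2, ∀ y, dist y x < 2 ^ k / 6 → gridCell e k y = gridCell e k x := by
  choose e he using fun i => exists_dyadicIndex_eq_of_abs_sub_lt k (x i)
  exact ⟨e, fun y hy => funext fun i => he i (y i) ((dist_le_pi_dist y x i).trans_lt hy)⟩

lemma card_le_of_injOn_gridCell {α : Type*} {e : ι → Fin 2} {k : ℤ} {m : ℕ} {f : α → ι → ℝ}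
    {T : Finset α} {B : Finset (ι → ℤ)} (hinj : Set.InjOn (gridCell e k ∘ f) T)
    (hB : ∀ w ∈ T, gridCell e (k + m) (f w) ∈ B) :
    #T ≤ (2 ^ m + 1) ^ Fintype.card ι * #B := by
  classical
  have hcard : #(B ×ˢ (univ : Finset (ι → ZMod (2 ^ m + 1)))) =
      (2 ^ m + 1) ^ Fintype.card ι * #B := by
    rw [card_product, card_univ, Fintype.card_fun, ZMod.card, mul_comm]
  rw [← hcard]
  refine card_le_card_of_injOn
    (fun w => (gridCell e (k + m) (f w), fun i => (gridCell e k (f w) i : ZMod (2 ^ m + 1))))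
    (fun w hw => mem_product.2 ⟨hB w hw, mem_univ _⟩) fun w hw w' hw' heq => hinj hw hw' ?_
  exact gridCell_eq_of_intCast_eq (Prod.ext_iff.1 heq).1 (congrFun (Prod.ext_iff.1 heq).2)

end Grid

section Covering

open scoped NNReal

variable {M ι : Type*} [MetricSpace M] [Fintype ι] {K K' : ℝ≥0} {f : M → ι → ℝ} {δ s : ℝ}
  {C : Finset M} {m : ℕ}

/-- The largest dyadic scale whose grid cells, pulled back along a map whose inverse is
`K'`-Lipschitz, have diameter at most `δ` times the isolation radius of `w`. The denominator is
`K' + 1` so that `K' = 0` is allowed. -/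
noncomputable def fineLevel (K' : ℝ≥0) (δ : ℝ) (C : Finset M) (w : M) : ℤ :=
  Int.log 2 (δ * isolationRadius (C : Set M) w / (K' + 1))

lemma mul_two_zpow_fineLevel_le (hδ : 0 < δ) (hC : (C : Set M).Nontrivial) (w : M) :
    K' * (2 : ℝ) ^ fineLevel K' δ C w ≤ δ * isolationRadius (C : Set M) w := by
  have hρ : 0 < isolationRadius (C : Set M) w := isolationRadius_pos C.finite_toSet hC w
  have hlog : (2 : ℝ) ^ fineLevel K' δ C w ≤ δ * isolationRadius (C : Set M) w / (K' + 1) :=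
    mod_cast Int.zpow_log_le_self one_lt_two (by positivity)
  rw [le_div_iff₀ (by positivity)] at hlog
  have hpow : (0 : ℝ) < 2 ^ fineLevel K' δ C w := by positivity
  linarith

lemma mul_inv_mul_isolationRadius_lt (hδ : 0 < δ) (hC : (C : Set M).Nontrivial)
    (hm : 6 * K * (K' + 1) / δ ^ 2 ≤ (2 : ℝ) ^ m) (w : M) :
    K * (δ⁻¹ * isolationRadius (C : Set M) w) <
      (2 : ℝ) ^ (fineLevel K' δ C w + (m + 1 : ℕ)) / 6 := by
  set ρ := isolationRadius (C : Set M) w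
  have hρ : 0 < ρ := isolationRadius_pos C.finite_toSet hC w
  have hlog : δ * ρ / (K' + 1) < (2 : ℝ) ^ (fineLevel K' δ C w + 1) :=
    mod_cast Int.lt_zpow_succ_log_self one_lt_two (δ * ρ / (K' + 1))
  calc K * (δ⁻¹ * ρ) = δ * ρ / (K' + 1) * (6 * K * (K' + 1) / δ ^ 2) / 6 := by field_simp
    _ ≤ δ * ρ / (K' + 1) * 2 ^ m / 6 := by gcongr
    _ < 2 ^ (fineLevel K' δ C w + 1) * 2 ^ m / 6 := by gcongr
    _ = 2 ^ (fineLevel K' δ C w + (m + 1 : ℕ)) / 6 := by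
      rw [← zpow_natCast, ← zpow_add₀ two_ne_zero, Nat.cast_add_one, add_assoc, add_comm 1]

lemma dist_le_of_gridCell_comp_eq (hf' : AntilipschitzWith K' f) {e : ι → Fin 2} {k : ℤ} {x y : M}
    (h : gridCell e k (f x) = gridCell e k (f y)) : dist x y ≤ K' * 2 ^ k :=
  (hf'.le_mul_dist x y).trans (by gcongr; exact dist_le_of_gridCell_eq h)

open Classical in
/-- The points with fine level `k` whose cell at the coarse level `k + m` is branching, relative to
the grid `e`. -/
noncomputable def branchingPoints (K' : ℝ≥0) (f : M → ι → ℝ) (δ s : ℝ) (C : Finset M) (m : ℕ)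
    (e : ι → Fin 2) (k : ℤ) : Finset M :=
  {w ∈ C | fineLevel K' δ C w = k ∧ gridCell e (k + m) (f w) ∈
    branchingCells C (gridCell e k ∘ f) (gridCell e (k + m) ∘ f) s}

lemma card_branchingPoints_le (hf' : AntilipschitzWith K' f) (hδ : 0 < δ) (hδ1 : δ < 1)
    (hC : (C : Set M).Nontrivial) (e : ι → Fin 2) (k : ℤ) :
    #(branchingPoints K' f δ s C m e k) ≤ (2 ^ m + 1) ^ Fintype.card ι *
      #(branchingCells C (gridCell e k ∘ f) (gridCell e (k + m) ∘ f) s) := by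
  refine card_le_of_injOn_gridCell (f := f) (fun w hw w' hw' hww' => ?_)
    fun w hw => (mem_filter.1 hw).2.2
  obtain ⟨-, rfl, -⟩ := mem_filter.1 hw
  have hρ : 0 < isolationRadius (C : Set M) w := isolationRadius_pos C.finite_toSet hC w
  have hclose : dist w w' < isolationRadius (C : Set M) w := calc
    dist w w' ≤ K' * 2 ^ fineLevel K' δ C w := dist_le_of_gridCell_comp_eq hf' hww'
    _ ≤ δ * isolationRadius (C : Set M) w := mul_two_zpow_fineLevel_le hδ hC w
    _ < isolationRadius (C : Set M) w := mul_lt_of_lt_one_left hρ hδ1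
  by_contra hne
  exact hclose.not_ge (isolationRadius_le_dist (mem_filter.1 hw').1 (Ne.symm hne))

lemma exists_mem_branchingPoints (hf : LipschitzWith K f) (hf' : AntilipschitzWith K' f)
    (hδ : 0 < δ) (hC : (C : Set M).Nontrivial)
    (hm : 6 * K * (K' + 1) / δ ^ 2 ≤ (2 : ℝ) ^ m) {w : M} (hw : w ∈ C)
    (hsupp : IsSupported (C : Set M) δ s w) :
    ∃ e : ι → Fin 2, w ∈ branchingPoints K' f δ s C (m + 1) e (fineLevel K' δ C w) := by
  obtain ⟨e, he⟩ := exists_gridCell_eq_of_dist_lt (fineLevel K' δ C w + (m + 1 : ℕ)) (f w)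
  refine ⟨e, mem_filter.2 ⟨hw, rfl, mem_branchingCells_of_isSupported hw hsupp
    (fun x y hxy => ?_) fun x hx => he (f x) ?_⟩⟩
  · exact (dist_le_of_gridCell_comp_eq hf' hxy).trans (mul_two_zpow_fineLevel_le hδ hC w)
  · exact ((hf.dist_le_mul x w).trans (by gcongr)).trans_lt
      (mul_inv_mul_isolationRadius_lt hδ hC hm w)

lemma sum_card_branchingPoints_le (hf' : AntilipschitzWith K' f) (hδ : 0 < δ) (hδ1 : δ < 1)
    (hC : (C : Set M).Nontrivial) (hs : 0 < s) (e : ι → Fin 2) (L : Finset ℤ) :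
    (∑ k ∈ L, #(branchingPoints K' f δ s C m e k) : ℝ) ≤
      (2 ^ m + 1) ^ Fintype.card ι * (m * (2 * #C / s)) := by
  have hmono : Monotone fun k => Setoid.ker (gridCell e k ∘ f) :=
    fun _ _ hij x y => monotone_ker_gridCell e hij (x := f x) (y := f y)
  refine le_trans ?_ (mul_le_mul_of_nonneg_left (sum_card_branchingCells_le hs hmono m L)
    (by positivity))
  rw [mul_sum]
  exact sum_le_sum fun k _ => mod_cast card_branchingPoints_le hf' hδ hδ1 hC e k

open Classical in
lemma card_isSupported_le (hf : LipschitzWith K f) (hf' : AntilipschitzWith K' f)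
    (hδ : 0 < δ) (hδ1 : δ < 1) (hC : (C : Set M).Nontrivial) (hs : 0 < s)
    (hm : 6 * K * (K' + 1) / δ ^ 2 ≤ (2 : ℝ) ^ m) :
    (#{w ∈ C | IsSupported (C : Set M) δ s w} : ℝ) ≤ 2 ^ Fintype.card ι *
      ((2 ^ (m + 1) + 1) ^ Fintype.card ι * ((m + 1 : ℕ) * (2 * #C / s))) := by
  have hcover : {w ∈ C | IsSupported (C : Set M) δ s w} ⊆
      univ.biUnion fun e => (C.image (fineLevel K' δ C)).biUnion
        (branchingPoints K' f δ s C (m + 1) e) := by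
    intro w hw
    obtain ⟨hwC, hsupp⟩ := mem_filter.1 hw
    obtain ⟨e, he⟩ := exists_mem_branchingPoints hf hf' hδ hC hm hwC hsupp
    exact mem_biUnion.2 ⟨e, mem_univ e, mem_biUnion.2 ⟨_, mem_image_of_mem _ hwC, he⟩⟩
  calc (#{w ∈ C | IsSupported (C : Set M) δ s w} : ℝ)
      ≤ ∑ e : ι → Fin 2, ∑ k ∈ C.image (fineLevel K' δ C),
          (#(branchingPoints K' f δ s C (m + 1) e k) : ℝ) := by
        exact_mod_cast (card_le_card hcover).trans
          (card_biUnion_le.trans (sum_le_sum fun e _ => card_biUnion_le))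
    _ ≤ ∑ _e : ι → Fin 2,
          (2 ^ (m + 1) + 1) ^ Fintype.card ι * ((m + 1 : ℕ) * (2 * #C / s)) :=
        sum_le_sum fun e _ => sum_card_branchingPoints_le hf' hδ hδ1 hC hs e _
    _ = 2 ^ Fintype.card ι *
          ((2 ^ (m + 1) + 1) ^ Fintype.card ι * ((m + 1 : ℕ) * (2 * #C / s))) := by
        simp only [sum_const, card_univ, Fintype.card_fun, Fintype.card_fin, nsmul_eq_mul,
          Nat.cast_pow, Nat.cast_ofNat]

end Covering

end BenjaminiSchramm

open scoped NNReal in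
theorem benjamini_schramm_lemma_general {M ι : Type*} [MetricSpace M] [Fintype ι] {K K' : ℝ≥0}
    {f : M → ι → ℝ} (hf : LipschitzWith K f) (hf' : AntilipschitzWith K' f)
    {δ : ℝ} (hδ : 0 < δ) (hδ1 : δ < 1) :
    ∃ c : ℝ, 0 < c ∧ ∀ C : Set M, C.Finite → C.Nontrivial → ∀ s : ℝ, 0 < s →
      (({w ∈ C | IsSupported C δ s w}).ncard : ℝ) ≤ c * C.ncard / s := by
  classical
  obtain ⟨m, hm⟩ := pow_unbounded_of_one_lt (6 * K * (K' + 1) / δ ^ 2) (one_lt_two (α := ℝ))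
  refine ⟨2 ^ Fintype.card ι * ((2 ^ (m + 1) + 1) ^ Fintype.card ι * ((m + 1 : ℕ) * 2)),
    by positivity, fun C hfin hC s hs => ?_⟩
  lift C to Finset M using hfin
  have hcard := BenjaminiSchramm.card_isSupported_le hf hf' hδ hδ1 hC hs hm.le
  rw [← Set.ncard_coe_finset, Finset.coe_filter] at hcard
  refine hcard.trans_eq ?_
  rw [Set.ncard_coe_finset]
  ring

/-- Benjamini–Schramm lemma in `ℝ^d`. -/
theorem benjamini_schramm_lemma :
    ∀ d : ℕ, 1 ≤ d → ∀ δ : ℝ, 0 < δ → δ < 1 →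
      ∃ c : ℝ, 0 < c ∧
        ∀ C : Set (EuclideanSpace ℝ (Fin d)), C.Finite → 2 ≤ C.ncard →
          ∀ s : ℝ, 2 ≤ s →
            (({w ∈ C | IsSupported C δ s w}).ncard : ℝ) ≤ c * C.ncard / s := by
  intro d _ δ hδ hδ1
  obtain ⟨c, hc, h⟩ := benjamini_schramm_lemma_general
    (PiLp.lipschitzWith_ofLp 2 fun _ : Fin d => ℝ) (PiLp.antilipschitzWith_ofLp 2 _) hδ hδ1
  exact ⟨c, hc, fun C hfin hC s hs =>
    h C hfin (Set.one_lt_ncard_iff_nontrivial_and_finite.1 hC).1 s (two_pos.trans_le hs)⟩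
end

section
/- For every dimension d ≥ 1, every L ≥ 1, and every δ ∈ (0,1) there exists a constant c > 0 with the following property: for every metric space M that admits a map f : M → ℝ^d with L⁻¹·d_M(x,y) ≤ ‖f(x) − f(y)‖ ≤ L·d_M(x,y) for all x,y ∈ M (an L-bilipschitz embedding), every finite subset C of M with at least two elements, and every real s ≥ 2, the set of (δ,s)-supported points of C in M has cardinality at most c·|C|/s. -/
/-!
Map `M` into `ι → ℝ` with the supremum distance and consider the grids of side `3 ^ e`, `e : ℤ`,
each coordinate being shifted by `0` or by half a side. As `3` is odd, the cells of a fixed shift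
are nested, and every point is well inside its cell for one of the shifts (the one-third trick).
So a supported point `w` with isolation radius `ρ` has a cell of side comparable to `ρ` that
contains `s` points of `C` outside any one cell `m` scales finer, while the fine cell of `w`
contains no other point of `C`. Hence few supported points share such a coarse cell.

Such coarse cells are counted by letting every cell carry mass `min (s / 2) (number of points)`.
The total mass does not increase from a partition to a coarser one, and it drops by at least `s / 2`
for every coarse cell that has `s` points outside any one of its subcells. It is at most `|C|` and
never negative, so over all scales there are at most `2 * m * |C| / s` such cells for each shift.
-/

open scoped Finset NNReal

section TruncatedSums

variable {ι : Type*} {I : Finset ι} {a : ι → ℝ} {r : ℝ}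

lemma min_sum_le_sum_min (ha : ∀ i ∈ I, 0 ≤ a i) (hr : 0 ≤ r) :
    min r (∑ i ∈ I, a i) ≤ ∑ i ∈ I, min r (a i) := by
  refine Finset.le_sum_of_subadditive_on_pred (min r) (0 ≤ ·) (min_le_right r 0) ?_
    (fun _ _ => add_nonneg) a ha
  intro x y hx hy
  rcases min_cases r x with h | h <;> rcases min_cases r y with h' | h' <;>
    linarith [min_le_left r (x + y), min_le_right r (x + y)]

lemma two_mul_le_sum_min (ha : ∀ i ∈ I, 0 ≤ a i) (hr : 0 ≤ r) (hI : I.Nonempty)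
    (h : ∀ j ∈ I, 2 * r + a j ≤ ∑ i ∈ I, a i) : 2 * r ≤ ∑ i ∈ I, min r (a i) := by
  classical
  by_cases hlarge : ∃ j ∈ I, r ≤ a j
  · obtain ⟨j, hj, hrj⟩ := hlarge
    have hrest : r ≤ ∑ i ∈ I.erase j, a i := by
      linarith [h j hj, Finset.add_sum_erase I a hj]
    calc 2 * r = min r (a j) + min r (∑ i ∈ I.erase j, a i) := by
          rw [min_eq_left hrj, min_eq_left hrest, two_mul]
      _ ≤ min r (a j) + ∑ i ∈ I.erase j, min r (a i) := by
          gcongr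
          exact min_sum_le_sum_min (fun i hi => ha i (Finset.mem_of_mem_erase hi)) hr
      _ = ∑ i ∈ I, min r (a i) := Finset.add_sum_erase I (fun i => min r (a i)) hj
  · push Not at hlarge
    obtain ⟨j, hj⟩ := hI
    rw [Finset.sum_congr rfl fun i hi => min_eq_right (hlarge i hi).le]
    linarith [h j hj, ha j hj]

end TruncatedSums

lemma sum_sub_add_natCast_le {F : ℤ → ℝ} {B : ℝ} (hF : ∀ e, 0 ≤ F e) (hB : ∀ e, F e ≤ B)
    (a b : ℤ) (m : ℕ) : ∑ e ∈ Finset.Ico a b, (F e - F (e + m)) ≤ m * B := by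
  have hshift : ∑ e ∈ Finset.Ico a b, F (e + m) = ∑ e ∈ Finset.Ico (a + m) (b + m), F e :=
    Finset.sum_Ico_add' F a b m
  have hcover : Finset.Ico a b ⊆ Finset.Ico a (a + m) ∪ Finset.Ico (a + m) (b + m) :=
    (Finset.Ico_subset_Ico_right (by lia)).trans Finset.Ico_subset_Ico_union_Ico
  have hsplit : ∑ e ∈ Finset.Ico a b, F e ≤
      ∑ e ∈ Finset.Ico a (a + m), F e + ∑ e ∈ Finset.Ico (a + m) (b + m), F e := by
    rw [← Finset.sum_union (Finset.Ico_disjoint_Ico_consecutive _ _ _)]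
    exact Finset.sum_le_sum_of_subset_of_nonneg hcover fun e _ _ => hF e
  have hfirst : ∑ e ∈ Finset.Ico a (a + m), F e ≤ m * B := by
    simpa using Finset.sum_le_card_nsmul (Finset.Ico a (a + m)) F B fun e _ => hB e
  rw [Finset.sum_sub_distrib, hshift]
  linarith

section Partitions

variable {α β γ : Type*} [DecidableEq β] [DecidableEq γ]

/-- The number of points of `C`, except that each cell of the partition of `C` into fibres of `g`
counts for at most `r`. -/
def truncatedMass (C : Finset α) (g : α → β) (r : ℝ) : ℝ :=
  ∑ b ∈ C.image g, min r (#{x ∈ C | g x = b} : ℝ)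

open scoped Classical in
/-- The cells of `h` (given by their labels) that contain at least `s` points of `C` outside any
one cell of `g`. The cells are the fibres; `g` is meant to be the finer of the two partitions. -/
noncomputable def supportedCells (C : Finset α) (g : α → β) (h : α → γ) (s : ℝ) : Finset γ :=
  {c ∈ C.image h | ∀ p ∈ C, s ≤ (#{x ∈ C | h x = c ∧ g x ≠ g p} : ℝ)}

variable {C : Finset α} {g : α → β} {r s : ℝ}

lemma truncatedMass_nonneg (hr : 0 ≤ r) : 0 ≤ truncatedMass C g r :=
  Finset.sum_nonneg fun _ _ => le_min hr (Nat.cast_nonneg _)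

lemma cast_card_eq_sum_card_image (C : Finset α) (g : α → β) :
    (#C : ℝ) = ∑ b ∈ C.image g, (#{x ∈ C | g x = b} : ℝ) := by
  exact_mod_cast Finset.card_eq_sum_card_image g C

lemma truncatedMass_le_card : truncatedMass C g r ≤ #C := by
  rw [cast_card_eq_sum_card_image C g]
  exact Finset.sum_le_sum fun _ _ => min_le_right _ _

lemma min_card_le_truncatedMass (hr : 0 ≤ r) : min r (#C : ℝ) ≤ truncatedMass C g r := by
  rw [cast_card_eq_sum_card_image C g]
  exact min_sum_le_sum_min (fun _ _ => Nat.cast_nonneg _) hr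

lemma two_mul_le_truncatedMass (hr : 0 ≤ r) (hC : C.Nonempty)
    (h : ∀ p ∈ C, 2 * r ≤ (#{x ∈ C | g x ≠ g p} : ℝ)) : 2 * r ≤ truncatedMass C g r := by
  refine two_mul_le_sum_min (fun _ _ => Nat.cast_nonneg _) hr (hC.image g)
    (Finset.forall_mem_image.2 fun p hp => ?_)
  have hsplit : (#{x ∈ C | g x = g p} : ℝ) + #{x ∈ C | g x ≠ g p} = #C := by
    exact_mod_cast Finset.card_filter_add_card_filter_not (s := C) fun x => g x = g p
  rw [← cast_card_eq_sum_card_image]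
  linarith [h p hp]

lemma sum_truncatedMass_fiber (C : Finset α) (g : α → β) (φ : β → γ) (r : ℝ) :
    ∑ c ∈ C.image (φ ∘ g), truncatedMass {x ∈ C | φ (g x) = c} g r = truncatedMass C g r := by
  have hmaps : ∀ b ∈ C.image g, φ b ∈ C.image (φ ∘ g) := by
    rw [← Finset.image_image]
    exact fun b => Finset.mem_image_of_mem φ
  rw [truncatedMass, ← Finset.sum_fiberwise_of_maps_to hmaps]
  refine Finset.sum_congr rfl fun c _ => ?_
  rw [truncatedMass, Finset.filter_image]
  refine Finset.sum_congr rfl fun b hb => ?_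
  obtain ⟨x, hx, rfl⟩ := Finset.mem_image.1 hb
  have hfiber : {y ∈ ({y ∈ C | φ (g y) = c} : Finset α) | g y = g x} =
      ({y ∈ C | g y = g x} : Finset α) := by
    grind
  rw [hfiber]

theorem card_supportedCells_add_truncatedMass_comp_le (C : Finset α) (g : α → β) (φ : β → γ)
    (hs : 0 ≤ s) :
    s / 2 * #(supportedCells C g (φ ∘ g) s) + truncatedMass C (φ ∘ g) (s / 2) ≤
      truncatedMass C g (s / 2) := by
  classical
  have hs2 : 0 ≤ s / 2 := by positivity
  have hcount : s / 2 * #(supportedCells C g (φ ∘ g) s) =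
      ∑ c ∈ C.image (φ ∘ g), if ∀ p ∈ C, s ≤ (#{x ∈ C | φ (g x) = c ∧ g x ≠ g p} : ℝ)
        then s / 2 else 0 := by
    rw [← Finset.sum_filter, Finset.sum_const, nsmul_eq_mul, mul_comm]
    simp only [supportedCells, Function.comp_apply]
  rw [hcount, truncatedMass, ← Finset.sum_add_distrib, ← sum_truncatedMass_fiber C g φ]
  refine Finset.sum_le_sum fun c hc => ?_
  simp only [Function.comp_apply]
  split_ifs with hsupp
  · have hnonempty : ({x ∈ C | φ (g x) = c} : Finset α).Nonempty := by
      simpa [Finset.filter_nonempty_iff] using hc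
    have htwo := two_mul_le_truncatedMass (g := g) hs2 hnonempty fun p hp => by
      rw [Finset.filter_filter, mul_div_cancel₀ s two_ne_zero]
      exact hsupp p (Finset.mem_of_mem_filter p hp)
    linarith [min_le_left (s / 2) (#{x ∈ C | φ (g x) = c} : ℝ)]
  · rw [zero_add]
    exact min_card_le_truncatedMass hs2

theorem sum_card_supportedCells_le {g : ℤ → α → β} {φ : ℤ → β → β} {m : ℕ}
    (hg : ∀ e, g (e + m) = φ e ∘ g e) (C : Finset α) (hs : 0 < s) (E : Finset ℤ) :
    (∑ e ∈ E, #(supportedCells C (g e) (g (e + m)) s) : ℝ) ≤ 2 * m * #C / s := by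
  obtain ⟨a, ha⟩ := E.bddBelow
  obtain ⟨b, hb⟩ := E.bddAbove
  have hE : E ⊆ Finset.Ico a (b + 1) := fun e he =>
    Finset.mem_Ico.2 ⟨ha he, Int.lt_add_one_of_le (hb he)⟩
  have hstep (e : ℤ) : s / 2 * #(supportedCells C (g e) (g (e + m)) s) ≤
      truncatedMass C (g e) (s / 2) - truncatedMass C (g (e + m)) (s / 2) := by
    rw [hg, le_sub_iff_add_le]
    exact card_supportedCells_add_truncatedMass_comp_le C (g e) (φ e) hs.le
  have htotal : s / 2 * ∑ e ∈ E, (#(supportedCells C (g e) (g (e + m)) s) : ℝ) ≤ m * #C :=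
    calc s / 2 * ∑ e ∈ E, (#(supportedCells C (g e) (g (e + m)) s) : ℝ)
        ≤ s / 2 * ∑ e ∈ Finset.Ico a (b + 1), (#(supportedCells C (g e) (g (e + m)) s) : ℝ) := by
          gcongr
      _ ≤ ∑ e ∈ Finset.Ico a (b + 1),
            (truncatedMass C (g e) (s / 2) - truncatedMass C (g (e + m)) (s / 2)) := by
          rw [Finset.mul_sum]
          exact Finset.sum_le_sum fun e _ => hstep e
      _ ≤ m * #C :=
          sum_sub_add_natCast_le (fun _ => truncatedMass_nonneg (half_pos hs).le)
            (fun _ => truncatedMass_le_card) a (b + 1) m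
  rw [le_div_iff₀ hs]
  linarith

end Partitions

section Floor

lemma floor_div_sub_half_of_odd {b : ℕ} (hb : Odd b) (j : ℤ) (u : ℝ) :
    ⌊u / b - j / 2⌋ = (⌊u - j / 2⌋ - j * (b / 2 : ℕ)) / b := by
  have hb' : (b : ℝ) = 2 * (b / 2 : ℕ) + 1 := by
    exact_mod_cast (Nat.two_mul_div_two_add_one_of_odd hb).symm
  have hb0 : (b : ℝ) ≠ 0 := Nat.cast_ne_zero.2 hb.pos.ne'
  calc ⌊u / b - j / 2⌋ = ⌊(u - j / 2 - (j * (b / 2 : ℕ) : ℤ)) / b⌋ := by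
        congr 1
        rw [eq_div_iff hb0, sub_mul, div_mul_cancel₀ _ hb0, Int.cast_mul, Int.cast_natCast, hb']
        ring
    _ = (⌊u - j / 2⌋ - j * (b / 2 : ℕ)) / b := by
        rw [Int.floor_div_natCast, Int.floor_sub_intCast]

lemma floor_eq_floor_of_abs_sub_lt {u v ε : ℝ} (huv : |v - u| < ε)
    (hu : Int.fract u ∈ Set.Icc ε (1 - ε)) : ⌊v⌋ = ⌊u⌋ := by
  have := Int.floor_add_fract u
  obtain ⟨hlow, hhigh⟩ := abs_lt.1 huv
  rw [Int.floor_eq_iff]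
  constructor <;> linarith [hu.1, hu.2]

lemma exists_fract_sub_half_mem_Icc (u : ℝ) :
    ∃ j : Fin 2, Int.fract (u - (j : ℤ) / 2) ∈ Set.Icc (1 / 4 : ℝ) (1 - 1 / 4) := by
  have hfloor := Int.self_sub_floor u
  have h0 := Int.fract_nonneg u
  have h1 := Int.fract_lt_one u
  rcases lt_or_ge (Int.fract u) (1 / 4) with hlow | hlow
  · have hfract : Int.fract (u - 1 / 2) = Int.fract u + 1 / 2 :=
      Int.fract_eq_iff.2 ⟨by linarith, by linarith, ⌊u⌋ - 1, by push_cast; linarith⟩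
    refine ⟨1, ?_⟩
    simp only [Fin.val_one, Nat.cast_one, Int.cast_one, hfract]
    constructor <;> linarith
  rcases le_or_gt (Int.fract u) (1 - 1 / 4) with hhigh | hhigh
  · exact ⟨0, by simpa using ⟨by linarith, by linarith⟩⟩
  · have hfract : Int.fract (u - 1 / 2) = Int.fract u - 1 / 2 :=
      Int.fract_eq_iff.2 ⟨by linarith, by linarith, ⌊u⌋, by linarith⟩
    refine ⟨1, ?_⟩
    simp only [Fin.val_one, Nat.cast_one, Int.cast_one, hfract]
    constructor <;> linarith

end Floor

section Grid

variable {ι : Type*}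

/-- The label of the cell containing `x` in the grid of side `3 ^ e` shifted by half a side in the
coordinates `i` with `t i = 1`. -/
noncomputable def gridCell (t : ι → Fin 2) (e : ℤ) (x : ι → ℝ) : ι → ℤ :=
  fun i => ⌊x i / 3 ^ e - (t i : ℤ) / 2⌋

/-- The label of the cell of side `3 ^ (e + m)` that contains the cell of side `3 ^ e` labelled
`a`. The half-side shifts of the two grids differ by `3 ^ m / 2 = (3 ^ m - 1) / 2` small cells. -/
def gridParent (t : ι → Fin 2) (m : ℕ) (a : ι → ℤ) : ι → ℤ :=
  fun i => (a i - (t i : ℤ) * (3 ^ m / 2 : ℕ)) / (3 ^ m : ℕ)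

lemma gridCell_add_natCast (t : ι → Fin 2) (e : ℤ) (m : ℕ) (x : ι → ℝ) :
    gridCell t (e + m) x = gridParent t m (gridCell t e x) := by
  funext i
  have hodd : Odd (3 ^ m) := Odd.pow (by decide)
  rw [gridCell, gridParent, gridCell, ← floor_div_sub_half_of_odd hodd, Nat.cast_pow,
    Nat.cast_ofNat, zpow_add₀ three_ne_zero, zpow_natCast, div_div]

variable [Fintype ι]

lemma card_le_of_gridParent_eq {t : ι → Fin 2} {m : ℕ} {A : ι → ℤ} {S : Finset (ι → ℤ)}
    (hS : ∀ a ∈ S, gridParent t m a = A) : #S ≤ (3 ^ m) ^ Fintype.card ι := by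
  classical
  let corner (i : ι) : ℤ := A i * (3 ^ m : ℕ) + (t i : ℤ) * (3 ^ m / 2 : ℕ)
  have hsub : S ⊆ Fintype.piFinset fun i => Finset.Ico (corner i) (corner i + (3 ^ m : ℕ)) := by
    intro a ha
    rw [Fintype.mem_piFinset]
    intro i
    have hi := congrFun (hS a ha) i
    rw [gridParent, Int.ediv_eq_iff_of_pos (by positivity)] at hi
    rw [Finset.mem_Ico]
    constructor <;> linarith [hi.1, hi.2]
  simpa only [Fintype.card_piFinset, Int.card_Ico, add_sub_cancel_left, Int.toNat_natCast,
    Finset.prod_const, Finset.card_univ] using Finset.card_le_card hsub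

lemma dist_lt_of_gridCell_eq {t : ι → Fin 2} {e : ℤ} {x y : ι → ℝ}
    (h : gridCell t e x = gridCell t e y) : dist x y < 3 ^ e := by
  have hpos : (0 : ℝ) < 3 ^ e := by positivity
  rw [dist_pi_lt_iff hpos]
  intro i
  have hi := Int.abs_sub_lt_one_of_floor_eq_floor (congrFun h i)
  rwa [sub_sub_sub_cancel_right, ← sub_div, abs_div, abs_of_pos hpos, div_lt_one hpos] at hi

lemma exists_shift_gridCell_eq (e : ℤ) (x : ι → ℝ) :
    ∃ t : ι → Fin 2, ∀ y, dist y x < 3 ^ e / 4 → gridCell t e y = gridCell t e x := by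
  have hpos : (0 : ℝ) < 3 ^ e := by positivity
  choose t ht using fun i => exists_fract_sub_half_mem_Icc (x i / 3 ^ e)
  refine ⟨t, fun y hy => funext fun i => floor_eq_floor_of_abs_sub_lt ?_ (ht i)⟩
  rw [sub_sub_sub_cancel_right, ← sub_div, abs_div, abs_of_pos hpos, div_lt_iff₀ hpos]
  calc |y i - x i| ≤ dist y x := dist_le_pi_dist y x i
    _ < 1 / 4 * 3 ^ e := by linarith

lemma card_le_mul_card_of_gridCell_mem {α : Type*} {f : α → ι → ℝ} {t : ι → Fin 2} {e : ℤ} {m : ℕ}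
    {W : Finset α} {T : Finset (ι → ℤ)} (hT : ∀ w ∈ W, gridCell t (e + m) (f w) ∈ T)
    (hinj : Set.InjOn (fun w => gridCell t e (f w)) W) :
    #W ≤ (3 ^ m) ^ Fintype.card ι * #T := by
  refine Finset.card_le_mul_card_image_of_maps_to hT _ fun A _ => ?_
  rw [← Finset.card_image_of_injOn (hinj.mono (Finset.coe_subset.2 (Finset.filter_subset _ W)))]
  refine card_le_of_gridParent_eq (t := t) (m := m) (A := A) (Finset.forall_mem_image.2 ?_)
  intro w hw
  rw [← gridCell_add_natCast]
  exact (Finset.mem_filter.1 hw).2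

end Grid

lemma exists_zpow_three_add_natCast {a : ℝ} (ha : 0 < a) (m : ℕ) :
    ∃ e : ℤ, a < 3 ^ (e + m) ∧ (3 : ℝ) ^ e * 3 ^ m ≤ 3 * a := by
  obtain ⟨n, hn, hn'⟩ := exists_mem_Ico_zpow ha (by norm_num : (1 : ℝ) < 3)
  refine ⟨n + 1 - m, by rwa [sub_add_cancel], ?_⟩
  rw [← zpow_natCast, ← zpow_add₀ three_ne_zero, sub_add_cancel, zpow_add_one₀ three_ne_zero]
  linarith

section Isolation

variable {M : Type*} [MetricSpace M] {C : Set M} {w z : M}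

lemma isolationRadius_le_dist (hz : z ∈ C) (hzw : z ≠ w) : isolationRadius C w ≤ dist w z :=
  csInf_le ⟨0, by rintro _ ⟨_, _, _, rfl⟩; exact dist_nonneg⟩ ⟨z, hz, hzw, rfl⟩

lemma isolationRadius_pos (hfin : C.Finite) (hC : C.Nontrivial) (w : M) :
    0 < isolationRadius C w := by
  have hdist : {r : ℝ | ∃ z ∈ C, z ≠ w ∧ r = dist w z}.Finite :=
    (hfin.image (dist w)).subset (by rintro _ ⟨z, hz, _, rfl⟩; exact ⟨z, hz, rfl⟩)
  obtain ⟨z, hz, hzw⟩ := hC.exists_ne w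
  have hne : {r : ℝ | ∃ z ∈ C, z ≠ w ∧ r = dist w z}.Nonempty := ⟨_, z, hz, hzw, rfl⟩
  obtain ⟨z', _, hz'w, hz'⟩ := hne.csInf_mem hdist
  rw [isolationRadius, hz']
  exact dist_pos.2 hz'w.symm

end Isolation

section Supported

variable {M : Type*} [MetricSpace M] {C : Finset M} {δ s : ℝ} {w : M}

lemma IsSupported.mem_supportedCells {β γ : Type*} [DecidableEq β] [DecidableEq γ]
    {g : M → β} {h : M → γ} (hw : w ∈ C) (hsupp : IsSupported (C : Set M) δ s w)
    (hcoarse : ∀ x, dist x w ≤ δ⁻¹ * isolationRadius (C : Set M) w → h x = h w)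
    (hfine : ∀ x p, g x = g p → dist x p ≤ δ * isolationRadius (C : Set M) w) :
    h w ∈ supportedCells C g h s := by
  classical
  refine Finset.mem_filter.2 ⟨Finset.mem_image_of_mem h hw, fun p _ => (hsupp p).trans ?_⟩
  rw [← Set.ncard_coe_finset]
  refine Nat.cast_le.2 (Set.ncard_le_ncard ?_ (Finset.finite_toSet _))
  rintro x ⟨hxC, hxw, hxp⟩
  exact Finset.mem_coe.2 (Finset.mem_filter.2 ⟨hxC, hcoarse x hxw, fun hg => hxp (hfine x p hg)⟩)

variable {ι : Type*} [Fintype ι] {K L : ℝ≥0} {f : M → ι → ℝ} {m : ℕ}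

/- The coarse side `3 ^ (e + m)` has to exceed `4 * L * δ⁻¹ * ρ`, so that one of the shifted cells
contains the image of the ball of radius `δ⁻¹ * ρ`; the summand `1` keeps that lower bound positive
when `L = 0`. -/
lemma IsSupported.exists_gridCell (hδ : 0 < δ)
    (hm : K * (3 * (4 * L * δ⁻¹ + 1)) < min δ 1 * 3 ^ m) (hfK : AntilipschitzWith K f)
    (hfL : LipschitzWith L f) (hC : (C : Set M).Nontrivial) (hw : w ∈ C)
    (hsupp : IsSupported (C : Set M) δ s w) :
    ∃ (t : ι → Fin 2) (e : ℤ),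
      gridCell t (e + m) (f w) ∈
        supportedCells C (fun x => gridCell t e (f x)) (fun x => gridCell t (e + m) (f x)) s ∧
      ∀ z ∈ C, gridCell t e (f z) = gridCell t e (f w) → z = w := by
  have hρ := isolationRadius_pos C.finite_toSet hC w
  set ρ := isolationRadius (C : Set M) w
  obtain ⟨e, hcoarse, hfine⟩ :=
    exists_zpow_three_add_natCast (a := (4 * L * δ⁻¹ + 1) * ρ) (by positivity) m
  obtain ⟨t, ht⟩ := exists_shift_gridCell_eq (e + m) (f w)
  have hside : K * (3 : ℝ) ^ e < min δ 1 * ρ := by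
    refine lt_of_mul_lt_mul_right (a := 3 ^ m) ?_ (by positivity)
    calc K * (3 : ℝ) ^ e * 3 ^ m ≤ K * (3 * ((4 * L * δ⁻¹ + 1) * ρ)) := by
          rw [mul_assoc]
          gcongr
      _ = K * (3 * (4 * L * δ⁻¹ + 1)) * ρ := by ring
      _ < min δ 1 * 3 ^ m * ρ := by gcongr
      _ = min δ 1 * ρ * 3 ^ m := by ring
  have hdist (x y : M) (hxy : gridCell t e (f x) = gridCell t e (f y)) :
      dist x y < min δ 1 * ρ :=
    calc dist x y ≤ K * dist (f x) (f y) := hfK.le_mul_dist x y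
      _ ≤ K * 3 ^ e := by gcongr; exact (dist_lt_of_gridCell_eq hxy).le
      _ < min δ 1 * ρ := hside
  refine ⟨t, e, hsupp.mem_supportedCells (h := fun x => gridCell t (e + m) (f x)) hw ?_ ?_, ?_⟩
  · intro x hx
    refine ht (f x) ?_
    have hfx : dist (f x) (f w) ≤ L * (δ⁻¹ * ρ) := hfL.dist_le_mul_of_le hx
    linarith
  · intro x p hxp
    exact (hdist x p hxp).le.trans (mul_le_mul_of_nonneg_right (min_le_left δ 1) hρ.le)
  · intro z hz hzw
    by_contra hne
    have hlt : dist w z < 1 * ρ := by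
      rw [dist_comm]
      exact (hdist z w hzw).trans_le (mul_le_mul_of_nonneg_right (min_le_right δ 1) hρ.le)
    linarith [isolationRadius_le_dist (Finset.mem_coe.2 hz) hne]

open scoped Classical in
theorem card_isSupported_le (hδ : 0 < δ) (hm : K * (3 * (4 * L * δ⁻¹ + 1)) < min δ 1 * 3 ^ m)
    (hfK : AntilipschitzWith K f) (hfL : LipschitzWith L f) (hC : (C : Set M).Nontrivial)
    (hs : 0 < s) :
    (#{w ∈ C | IsSupported (C : Set M) δ s w} : ℝ) ≤
      2 ^ Fintype.card ι * ((3 ^ m) ^ Fintype.card ι * (2 * m * #C / s)) := by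
  set W : Finset M := {w ∈ C | IsSupported (C : Set M) δ s w}
  choose! t e hmem hiso using fun w (hw : w ∈ W) =>
    (Finset.mem_filter.1 hw).2.exists_gridCell hδ hm hfK hfL hC (Finset.mem_filter.1 hw).1
  let cells (τ : ι → Fin 2) (k : ℤ) : Finset (ι → ℤ) :=
    supportedCells C (fun x => gridCell τ k (f x)) (fun x => gridCell τ (k + m) (f x)) s
  have hclass (τ : ι → Fin 2) (k : ℤ) :
      #{w ∈ W | (t w, e w) = (τ, k)} ≤ (3 ^ m) ^ Fintype.card ι * #(cells τ k) := by
    refine card_le_mul_card_of_gridCell_mem (t := τ) (e := k) (f := f) ?_ ?_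
    · intro w hw
      obtain ⟨hwW, rfl, rfl⟩ : w ∈ W ∧ t w = τ ∧ e w = k := by simpa using hw
      exact hmem w hwW
    · intro w hw w' hw' heq
      obtain ⟨hwW, rfl, rfl⟩ : w ∈ W ∧ t w = τ ∧ e w = k := by simpa using hw
      exact (hiso w hwW w' (by grind) heq.symm).symm
  have hcells (τ : ι → Fin 2) : (∑ k ∈ W.image e, #(cells τ k) : ℝ) ≤ 2 * m * #C / s :=
    sum_card_supportedCells_le (g := fun k x => gridCell τ k (f x))
      (φ := fun _ => gridParent τ m) (fun k => funext fun x => gridCell_add_natCast τ k m (f x))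
      C hs (W.image e)
  have hcard : #W ≤ ∑ τ, ∑ k ∈ W.image e, (3 ^ m) ^ Fintype.card ι * #(cells τ k) := by
    rw [Finset.card_eq_sum_card_fiberwise (f := fun w => (t w, e w))
      (t := Finset.univ ×ˢ W.image e) (fun w hw => by simpa using ⟨w, hw, rfl⟩),
      Finset.sum_product]
    exact Finset.sum_le_sum fun τ _ => Finset.sum_le_sum fun k _ => hclass τ k
  calc (#W : ℝ) ≤ ∑ τ, (3 ^ m) ^ Fintype.card ι * ∑ k ∈ W.image e, (#(cells τ k) : ℝ) := by
        simp only [Finset.mul_sum]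
        exact_mod_cast hcard
    _ ≤ ∑ _τ : ι → Fin 2, (3 ^ m) ^ Fintype.card ι * (2 * m * #C / s) := by
        gcongr with τ
        exact hcells τ
    _ = 2 ^ Fintype.card ι * ((3 ^ m) ^ Fintype.card ι * (2 * m * #C / s)) := by simp

end Supported

theorem benjamini_schramm_bilipschitz_general (E : Type*) [NormedAddCommGroup E] [NormedSpace ℝ E]
    [FiniteDimensional ℝ E] (K L : ℝ≥0) {δ : ℝ} (hδ : 0 < δ) :
    ∃ c : ℝ, 0 < c ∧
      ∀ (M : Type*) [MetricSpace M] (f : M → E), AntilipschitzWith K f → LipschitzWith L f →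
        ∀ C : Set M, C.Finite → C.Nontrivial → ∀ s : ℝ, 0 < s →
          ({w ∈ C | IsSupported C δ s w}.ncard : ℝ) ≤ c * C.ncard / s := by
  classical
  let Φ := (Module.finBasis ℝ E).equivFunL
  obtain ⟨K', hΦK⟩ : ∃ K', AntilipschitzWith K' Φ := ⟨_, Φ.antilipschitz⟩
  obtain ⟨L', hΦL⟩ : ∃ L', LipschitzWith L' Φ := ⟨_, Φ.lipschitz⟩
  obtain ⟨m, hm⟩ := pow_unbounded_of_one_lt
    ((K * K' : ℝ≥0) * (3 * (4 * (L' * L : ℝ≥0) * δ⁻¹ + 1)) / min δ 1) (by norm_num : (1 : ℝ) < 3)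
  rw [div_lt_iff₀' (lt_min hδ one_pos)] at hm
  set n := Module.finrank ℝ E
  refine ⟨2 ^ n * ((3 ^ m) ^ n * (2 * (m + 1))), by positivity, ?_⟩
  intro M _ f hfK hfL C hfin hC s hs
  lift C to Finset M using hfin
  have hcard : {w ∈ (C : Set M) | IsSupported (C : Set M) δ s w}.ncard =
      #{w ∈ C | IsSupported (C : Set M) δ s w} := by
    simp [← Set.ncard_coe_finset]
  calc ({w ∈ (C : Set M) | IsSupported (C : Set M) δ s w}.ncard : ℝ)
      ≤ 2 ^ n * ((3 ^ m) ^ n * (2 * m * #C / s)) := by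
        rw [hcard]
        simpa using card_isSupported_le hδ hm (hΦK.comp hfK) (hΦL.comp hfL) hC hs
    _ ≤ 2 ^ n * ((3 ^ m) ^ n * (2 * (m + 1) * #C / s)) := by
        gcongr
        exact le_add_of_nonneg_right zero_le_one
    _ = 2 ^ n * ((3 ^ m) ^ n * (2 * (m + 1))) * (C : Set M).ncard / s := by
        rw [Set.ncard_coe_finset]
        ring

/-- Benjamini–Schramm lemma for metric spaces admitting an `L`-bilipschitz embedding
into `ℝ^d` (Lemma 5.1 of the paper). -/
theorem benjamini_schramm_bilipschitz :
    ∀ d : ℕ, 1 ≤ d → ∀ L : ℝ, 1 ≤ L → ∀ δ : ℝ, 0 < δ → δ < 1 →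
      ∃ c : ℝ, 0 < c ∧
        ∀ (M : Type) [MetricSpace M] (f : M → EuclideanSpace ℝ (Fin d)),
          (∀ x y : M, L⁻¹ * dist x y ≤ ‖f x - f y‖ ∧ ‖f x - f y‖ ≤ L * dist x y) →
          ∀ C : Set M, C.Finite → 2 ≤ C.ncard →
            ∀ s : ℝ, 2 ≤ s →
              (({w ∈ C | IsSupported C δ s w}).ncard : ℝ) ≤ c * C.ncard / s := by
  intro d _ L hL δ hδ _
  have hL0 : 0 < L := one_pos.trans_le hL
  lift L to ℝ≥0 using hL0.le
  obtain ⟨c, hc, hbound⟩ :=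
    benjamini_schramm_bilipschitz_general (EuclideanSpace ℝ (Fin d)) L L hδ
  refine ⟨c, hc, fun M _ f hf C hfin hC s hs => hbound M f (.of_le_mul_dist fun x y => ?_)
    (.of_dist_le_mul fun x y => (dist_eq_norm _ _).trans_le (hf x y).2) C hfin
    (Set.one_lt_ncard_iff_nontrivial_and_finite.1 hC).1 s (two_pos.trans_le hs)⟩
  exact (inv_mul_le_iff₀ hL0).1 ((hf x y).1.trans_eq (dist_eq_norm _ _).symm)
end
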